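/- arXiv:2108.12664 — 2 statements merged into one kernel-verified Lean document; each statement's English description precedes it below -/
import Mathlib

section
/- For every m > 0 there exists a constant C₂ > 0, independent of ε, such that for all ε ∈ (0,1] and all (x,z) ∈ ℝ² × ℝ², |Ḡ_ε(x,z) − G̃_ε(x,z)| ≤ C₂. -/
open MeasureTheory

/-- The lattice symbol `σ_ε(k) = (4/ε²)(sin²(εk₁/2) + sin²(εk₂/2))`. -/
noncomputable def sigmaEps (ε : ℝ) (k : ℝ × ℝ) : ℝ :=
  (4 / ε ^ 2) * (Real.sin (ε * k.1 / 2) ^ 2 + Real.sin (ε * k.2 / 2) ^ 2)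

/-- The extended lattice Green function
`Ḡ_ε(x,z) = (2π)⁻⁴ ∫_{ℝ⁴} [sin²(εk₁/2)sin²(εk₂/2)/(ε⁴k₁²k₂²)] e^{-i(x·y+z·k)}
(|y|² + σ_ε(k) + m²)⁻² dy dk`. -/
noncomputable def GbarEps (m ε : ℝ) (x z : ℝ × ℝ) : ℂ :=
  ((1 / (2 * Real.pi) ^ 4 : ℝ) : ℂ) *
    ∫ y : ℝ × ℝ, ∫ k : ℝ × ℝ,
      ((Real.sin (ε * k.1 / 2) ^ 2 * Real.sin (ε * k.2 / 2) ^ 2 /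
          (ε ^ 4 * k.1 ^ 2 * k.2 ^ 2) : ℝ) : ℂ) *
        Complex.exp (-Complex.I * ((x.1 * y.1 + x.2 * y.2) + (z.1 * k.1 + z.2 * k.2))) /
        ((((y.1 ^ 2 + y.2 ^ 2) + sigmaEps ε k + m ^ 2) ^ 2 : ℝ) : ℂ)

/-- The smoothed continuum Green function
`G̃_ε(x,z) = (2π)⁻⁴ ∫_{ℝ⁴} [sin²(εk₁/2)sin²(εk₂/2)/(ε⁴k₁²k₂²)] e^{-i(x·y+z·k)}
(|y|² + |k|² + m²)⁻² dy dk`. -/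
noncomputable def GtildeEps (m ε : ℝ) (x z : ℝ × ℝ) : ℂ :=
  ((1 / (2 * Real.pi) ^ 4 : ℝ) : ℂ) *
    ∫ y : ℝ × ℝ, ∫ k : ℝ × ℝ,
      ((Real.sin (ε * k.1 / 2) ^ 2 * Real.sin (ε * k.2 / 2) ^ 2 /
          (ε ^ 4 * k.1 ^ 2 * k.2 ^ 2) : ℝ) : ℂ) *
        Complex.exp (-Complex.I * ((x.1 * y.1 + x.2 * y.2) + (z.1 * k.1 + z.2 * k.2))) /
        ((((y.1 ^ 2 + y.2 ^ 2) + (k.1 ^ 2 + k.2 ^ 2) + m ^ 2) ^ 2 : ℝ) : ℂ)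

/-! The weight `w_ε(k) = sin²(εk₁/2) sin²(εk₂/2) / (ε⁴ k₁² k₂²)` tends to `1/16` as `ε → 0`, so
neither integral is bounded near the origin of `(x, z)` uniformly in `ε`; only their difference is.
Taking absolute values removes the phase, and since `∫_{ℝ²} (|y|² + a)⁻² dy = π / a`, integrating
out `y` leaves `π ∫ w_ε(k) (1 / (σ_ε(k) + m²) - 1 / (|k|² + m²)) dk`. With `p = εk` and
`L(t) = 4 sin²(t/2)`, the inequality `t² - L(t) ≤ t⁴` bounds the integrand by a multiple of
`ε² / ((1 + p₁²)(1 + p₂²))`, whose `k`-integral does not depend on `ε`. -/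

section PlanarIntegral

lemma integral_Ioi_mul_inv_sq_add_sq {a : ℝ} (ha : 0 < a) :
    ∫ r in Set.Ioi (0 : ℝ), r * ((r ^ 2 + a) ^ 2)⁻¹ = a⁻¹ / 2 := by
  have hderiv (r : ℝ) :
      HasDerivAt (fun r : ℝ => -(r ^ 2 + a)⁻¹ / 2) (r * ((r ^ 2 + a) ^ 2)⁻¹) r := by
    have hne : r ^ 2 + a ≠ 0 := by positivity
    refine ((((hasDerivAt_pow 2 r).add_const a).fun_inv hne).fun_neg.div_const 2).congr_deriv ?_
    push_cast
    ring
  have hlim : Filter.Tendsto (fun r : ℝ => -(r ^ 2 + a)⁻¹ / 2) Filter.atTop (nhds 0) := by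
    have hinf := Filter.tendsto_atTop_add_const_right Filter.atTop a
      (Filter.tendsto_pow_atTop (α := ℝ) two_ne_zero)
    simpa only [neg_zero, zero_div, Function.comp_def] using
      (tendsto_inv_atTop_zero.comp hinf).neg.div_const 2
  rw [integral_Ioi_of_hasDerivAt_of_nonneg' (fun r _ => hderiv r)
    (fun r hr => mul_nonneg (Set.mem_Ioi.mp hr).le (by positivity)) hlim]
  ring

lemma integral_inv_sq_add_sq_add_sq {a : ℝ} (ha : 0 < a) :
    ∫ y : ℝ × ℝ, ((y.1 ^ 2 + y.2 ^ 2 + a) ^ 2)⁻¹ = Real.pi * a⁻¹ := by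
  have hpolar (q : ℝ × ℝ) : (q.1 * Real.cos q.2) ^ 2 + (q.1 * Real.sin q.2) ^ 2 = q.1 ^ 2 := by
    linear_combination q.1 ^ 2 * Real.sin_sq_add_cos_sq q.2
  calc ∫ y : ℝ × ℝ, ((y.1 ^ 2 + y.2 ^ 2 + a) ^ 2)⁻¹
      = ∫ q in Set.Ioi 0 ×ˢ Set.Ioo (-Real.pi) Real.pi, q.1 * ((q.1 ^ 2 + a) ^ 2)⁻¹ * 1 := by
        rw [← integral_comp_polarCoord_symm, polarCoord_target]
        simp only [polarCoord_symm_apply, hpolar, smul_eq_mul, mul_one]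
    _ = a⁻¹ / 2 * (2 * Real.pi) := by
        rw [Measure.volume_eq_prod,
          setIntegral_prod_mul (fun r : ℝ => r * ((r ^ 2 + a) ^ 2)⁻¹) (fun _ : ℝ => (1 : ℝ)),
          integral_Ioi_mul_inv_sq_add_sq ha, setIntegral_const, measureReal_def, Real.volume_Ioo,
          ENNReal.toReal_ofReal (by linarith [Real.pi_pos])]
        simp only [smul_eq_mul]
        ring
    _ = Real.pi * a⁻¹ := by ring

lemma integrable_inv_sq_add_sq_add_sq {a : ℝ} (ha : 0 < a) :
    Integrable fun y : ℝ × ℝ => ((y.1 ^ 2 + y.2 ^ 2 + a) ^ 2)⁻¹ :=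
  .of_integral_ne_zero <| by
    rw [integral_inv_sq_add_sq_add_sq ha]
    positivity

end PlanarIntegral

section Comparison

variable {K E : Type*} [MeasurableSpace K] {ν : Measure K}
  [NormedAddCommGroup E] [NormedSpace ℝ E]
  {φ : (ℝ × ℝ) × K → E} {w a b : K → ℝ} {c : ℝ}

lemma integrable_inv_sq_smul (hc : 0 < c) (hca : ∀ k, c ≤ a k) (ha : Measurable a)
    (hw : Integrable w ν) (hφ : AEStronglyMeasurable φ (volume.prod ν))
    (hφw : ∀ y k, ‖φ (y, k)‖ ≤ w k) :
    Integrable (fun q => ((q.1.1 ^ 2 + q.1.2 ^ 2 + a q.2) ^ 2)⁻¹ • φ q) (volume.prod ν) := by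
  have hmeas : Measurable fun q : (ℝ × ℝ) × K => ((q.1.1 ^ 2 + q.1.2 ^ 2 + a q.2) ^ 2)⁻¹ := by
    fun_prop
  refine ((integrable_inv_sq_add_sq_add_sq hc).mul_prod hw).mono'
    (hmeas.aestronglyMeasurable.smul hφ) (.of_forall fun ⟨y, k⟩ => ?_)
  rw [norm_smul, Real.norm_of_nonneg (by positivity)]
  gcongr
  exacts [hca k, hφw y k]

theorem norm_integral_inv_sq_smul_sub_le [SFinite ν] (hc : 0 < c) (hca : ∀ k, c ≤ a k)
    (hab : ∀ k, a k ≤ b k) (ha : Measurable a) (hb : Measurable b) (hw : Integrable w ν)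
    (hφ : AEStronglyMeasurable φ (volume.prod ν)) (hφw : ∀ y k, ‖φ (y, k)‖ ≤ w k) :
    ‖(∫ y : ℝ × ℝ, ∫ k, ((y.1 ^ 2 + y.2 ^ 2 + a k) ^ 2)⁻¹ • φ (y, k) ∂ν) -
        ∫ y : ℝ × ℝ, ∫ k, ((y.1 ^ 2 + y.2 ^ 2 + b k) ^ 2)⁻¹ • φ (y, k) ∂ν‖ ≤
      Real.pi * ∫ k, w k * ((a k)⁻¹ - (b k)⁻¹) ∂ν := by
  have hcb (k : K) : c ≤ b k := (hca k).trans (hab k)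
  have ha_pos (k : K) : 0 < a k := hc.trans_le (hca k)
  have hb_pos (k : K) : 0 < b k := hc.trans_le (hcb k)
  have hφa := integrable_inv_sq_smul hc hca ha hw hφ hφw
  have hφb := integrable_inv_sq_smul hc hcb hb hw hφ hφw
  have hw' : AEStronglyMeasurable (fun q : (ℝ × ℝ) × K => w q.2) (volume.prod ν) :=
    hw.aestronglyMeasurable.comp_snd
  have hww (y : ℝ × ℝ) (k : K) : ‖w k‖ ≤ w k :=
    (Real.norm_of_nonneg ((norm_nonneg _).trans (hφw y k))).le
  have hdom := (integrable_inv_sq_smul hc hca ha hw hw' hww).sub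
    (integrable_inv_sq_smul hc hcb hb hw hw' hww)
  rw [← integral_prod _ hφa, ← integral_prod _ hφb, ← integral_sub hφa hφb]
  refine (norm_integral_le_of_norm_le hdom (.of_forall fun ⟨y, k⟩ => ?_)).trans_eq ?_
  · have hmono : ((y.1 ^ 2 + y.2 ^ 2 + b k) ^ 2)⁻¹ ≤ ((y.1 ^ 2 + y.2 ^ 2 + a k) ^ 2)⁻¹ := by
      have := ha_pos k
      gcongr
      exact hab k
    simp only [Pi.sub_apply, ← sub_smul, norm_smul, Real.norm_of_nonneg (sub_nonneg.mpr hmono)]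
    rw [smul_eq_mul]
    exact mul_le_mul_of_nonneg_left (hφw y k) (sub_nonneg.mpr hmono)
  · rw [integral_prod_symm _ hdom, ← integral_const_mul]
    refine integral_congr_ae (.of_forall fun k => ?_)
    simp only [Pi.sub_apply, smul_eq_mul]
    rw [integral_sub ((integrable_inv_sq_add_sq_add_sq (ha_pos k)).mul_const _)
      ((integrable_inv_sq_add_sq_add_sq (hb_pos k)).mul_const _), integral_mul_const,
      integral_mul_const, integral_inv_sq_add_sq_add_sq (ha_pos k),
      integral_inv_sq_add_sq_add_sq (hb_pos k)]
    ring

end Comparison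

section LatticeSymbol

/-- The symbol `4 sin²(t/2)` of minus the second difference operator on `ℤ`; the unit-spacing,
one-dimensional building block of `sigmaEps`. -/
noncomputable def latticeSymbol (t : ℝ) : ℝ := 4 * Real.sin (t / 2) ^ 2

lemma latticeSymbol_nonneg (t : ℝ) : 0 ≤ latticeSymbol t := by
  unfold latticeSymbol
  positivity

lemma latticeSymbol_le_four (t : ℝ) : latticeSymbol t ≤ 4 := by
  unfold latticeSymbol
  linarith [Real.sin_sq_le_one (t / 2)]

lemma latticeSymbol_eq (t : ℝ) : latticeSymbol t = 2 - 2 * Real.cos t := by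
  rw [latticeSymbol, Real.sin_sq_eq_half_sub, mul_div_cancel₀ t two_ne_zero]
  ring

lemma latticeSymbol_le_sq (t : ℝ) : latticeSymbol t ≤ t ^ 2 := by
  rw [latticeSymbol_eq]
  linarith [Real.one_sub_sq_div_two_le_cos (x := t)]

lemma sq_sub_latticeSymbol_le_pow_four (t : ℝ) : t ^ 2 - latticeSymbol t ≤ t ^ 4 := by
  rcases le_total |t| 1 with ht | ht
  · have hcos := (abs_le.mp (Real.cos_bound ht)).2
    rw [Even.pow_abs (by decide)] at hcos
    rw [latticeSymbol_eq]
    linarith [show 0 ≤ t ^ 4 by positivity]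
  · have hsq : 1 ≤ t ^ 2 := (one_le_sq_iff_one_le_abs t).mpr ht
    nlinarith [latticeSymbol_nonneg t]

lemma latticeSymbol_div_sq_le (t : ℝ) : latticeSymbol t / t ^ 2 ≤ 5 * (1 + t ^ 2)⁻¹ := by
  rcases eq_or_ne t 0 with rfl | ht
  · norm_num
  · rw [← div_eq_mul_inv, div_le_div_iff₀ (by positivity) (by positivity)]
    nlinarith [latticeSymbol_le_sq t, latticeSymbol_le_four t, sq_nonneg t]

lemma sq_sub_latticeSymbol_div_pow_four_le (t : ℝ) :
    (t ^ 2 - latticeSymbol t) / t ^ 4 ≤ 2 * (1 + t ^ 2)⁻¹ := by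
  rcases eq_or_ne t 0 with rfl | ht
  · norm_num
  · rw [← div_eq_mul_inv, div_le_div_iff₀ (by positivity) (by positivity)]
    nlinarith [sq_sub_latticeSymbol_le_pow_four t, latticeSymbol_nonneg t, sq_nonneg t]

lemma latticeSymbol_div_sq_mul_le {t A B : ℝ} (hA : 0 < A) (hLA : latticeSymbol t ≤ A)
    (hB : t ^ 2 ≤ B) :
    latticeSymbol t / t ^ 2 * ((t ^ 2 - latticeSymbol t) / (A * B)) ≤ 2 * (1 + t ^ 2)⁻¹ := by
  rcases eq_or_ne t 0 with rfl | ht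
  · norm_num
  have hgap : 0 ≤ t ^ 2 - latticeSymbol t := sub_nonneg.mpr (latticeSymbol_le_sq t)
  have hB_pos : 0 < B := (by positivity : 0 < t ^ 2).trans_le hB
  calc latticeSymbol t / t ^ 2 * ((t ^ 2 - latticeSymbol t) / (A * B))
      = latticeSymbol t / A * ((t ^ 2 - latticeSymbol t) / (t ^ 2 * B)) := by field_simp
    _ ≤ 1 * ((t ^ 2 - latticeSymbol t) / (t ^ 2 * t ^ 2)) := by
        gcongr
        exact (div_le_one hA).mpr hLA
    _ = (t ^ 2 - latticeSymbol t) / t ^ 4 := by ring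
    _ ≤ 2 * (1 + t ^ 2)⁻¹ := sq_sub_latticeSymbol_div_pow_four_le t

lemma latticeSymbol_mul_inv_sub_inv_le (p q : ℝ) {μ : ℝ} (hμ : 0 < μ) :
    latticeSymbol p / p ^ 2 * (latticeSymbol q / q ^ 2) *
        ((latticeSymbol p + latticeSymbol q + μ)⁻¹ - (p ^ 2 + q ^ 2 + μ)⁻¹) ≤
      20 * ((1 + p ^ 2)⁻¹ * (1 + q ^ 2)⁻¹) := by
  have hp := latticeSymbol_nonneg p
  have hq := latticeSymbol_nonneg q
  set A := latticeSymbol p + latticeSymbol q + μ with hA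
  set B := p ^ 2 + q ^ 2 + μ with hB
  have hA_pos : 0 < A := by positivity
  have hB_pos : 0 < B := by positivity
  have hpAB : latticeSymbol p / p ^ 2 * ((p ^ 2 - latticeSymbol p) / (A * B)) ≤
      2 * (1 + p ^ 2)⁻¹ :=
    latticeSymbol_div_sq_mul_le hA_pos (by linarith) (by linarith [sq_nonneg q])
  have hqAB : latticeSymbol q / q ^ 2 * ((q ^ 2 - latticeSymbol q) / (A * B)) ≤
      2 * (1 + q ^ 2)⁻¹ :=
    latticeSymbol_div_sq_mul_le hA_pos (by linarith) (by linarith [sq_nonneg p])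
  calc latticeSymbol p / p ^ 2 * (latticeSymbol q / q ^ 2) * (A⁻¹ - B⁻¹)
      = latticeSymbol p / p ^ 2 * ((p ^ 2 - latticeSymbol p) / (A * B)) *
            (latticeSymbol q / q ^ 2) +
          latticeSymbol q / q ^ 2 * ((q ^ 2 - latticeSymbol q) / (A * B)) *
            (latticeSymbol p / p ^ 2) := by
        rw [inv_sub_inv hA_pos.ne' hB_pos.ne', hA, hB]
        ring
    _ ≤ 2 * (1 + p ^ 2)⁻¹ * (5 * (1 + q ^ 2)⁻¹) + 2 * (1 + q ^ 2)⁻¹ * (5 * (1 + p ^ 2)⁻¹) := by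
        refine add_le_add (mul_le_mul hpAB (latticeSymbol_div_sq_le q) ?_ ?_)
          (mul_le_mul hqAB (latticeSymbol_div_sq_le p) ?_ ?_) <;> positivity
    _ = 20 * ((1 + p ^ 2)⁻¹ * (1 + q ^ 2)⁻¹) := by ring

lemma sigmaEps_eq (ε : ℝ) (k : ℝ × ℝ) :
    sigmaEps ε k = (latticeSymbol (ε * k.1) + latticeSymbol (ε * k.2)) / ε ^ 2 := by
  unfold sigmaEps latticeSymbol
  ring

lemma sigmaEps_nonneg (ε : ℝ) (k : ℝ × ℝ) : 0 ≤ sigmaEps ε k := by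
  unfold sigmaEps
  positivity

lemma sigmaEps_le {ε : ℝ} (hε : ε ≠ 0) (k : ℝ × ℝ) : sigmaEps ε k ≤ k.1 ^ 2 + k.2 ^ 2 := by
  rw [sigmaEps_eq, div_le_iff₀ (by positivity)]
  linarith [latticeSymbol_le_sq (ε * k.1), latticeSymbol_le_sq (ε * k.2)]

lemma measurable_sigmaEps (ε : ℝ) : Measurable (sigmaEps ε) := by
  unfold sigmaEps
  fun_prop

end LatticeSymbol

section CauchyProduct

/-- The product `1 / ((1 + (c k₁)²)(1 + (c k₂)²))` of rescaled Cauchy densities (not normalized),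
which dominates the `k`-integrands. -/
noncomputable def cauchyProduct (c : ℝ) (k : ℝ × ℝ) : ℝ :=
  (1 + (c * k.1) ^ 2)⁻¹ * (1 + (c * k.2) ^ 2)⁻¹

lemma integral_cauchyProduct (c : ℝ) : ∫ k, cauchyProduct c k = Real.pi ^ 2 / c ^ 2 := by
  have hline : ∫ t : ℝ, (1 + (c * t) ^ 2)⁻¹ = |c⁻¹| * Real.pi := by
    rw [Measure.integral_comp_mul_left (fun t : ℝ => (1 + t ^ 2)⁻¹), integral_univ_inv_one_add_sq,
      smul_eq_mul]
  calc ∫ k, cauchyProduct c k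
      = (∫ t : ℝ, (1 + (c * t) ^ 2)⁻¹) * ∫ t : ℝ, (1 + (c * t) ^ 2)⁻¹ :=
        integral_prod_mul (μ := volume) (ν := volume) (fun t : ℝ => (1 + (c * t) ^ 2)⁻¹)
          (fun t : ℝ => (1 + (c * t) ^ 2)⁻¹)
    _ = |c⁻¹| ^ 2 * Real.pi ^ 2 := by
        rw [hline]
        ring
    _ = Real.pi ^ 2 / c ^ 2 := by
        rw [sq_abs]
        ring

lemma integrable_cauchyProduct {c : ℝ} (hc : c ≠ 0) : Integrable (cauchyProduct c) :=
  .of_integral_ne_zero <| by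
    rw [integral_cauchyProduct]
    positivity

end CauchyProduct

section SmoothingWeight

/-- The smoothing factor `sin²(εk₁/2) sin²(εk₂/2) / (ε⁴ k₁² k₂²)` common to both Green functions.
Division by zero gives it the value `0` on the null set `k₁ k₂ = 0`. -/
noncomputable def smoothingWeight (ε : ℝ) (k : ℝ × ℝ) : ℝ :=
  Real.sin (ε * k.1 / 2) ^ 2 * Real.sin (ε * k.2 / 2) ^ 2 / (ε ^ 4 * k.1 ^ 2 * k.2 ^ 2)

lemma smoothingWeight_eq (ε : ℝ) (k : ℝ × ℝ) :
    smoothingWeight ε k =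
      latticeSymbol (ε * k.1) / (ε * k.1) ^ 2 * (latticeSymbol (ε * k.2) / (ε * k.2) ^ 2) / 16 := by
  unfold smoothingWeight latticeSymbol
  ring

lemma smoothingWeight_nonneg (ε : ℝ) (k : ℝ × ℝ) : 0 ≤ smoothingWeight ε k := by
  unfold smoothingWeight
  positivity

lemma smoothingWeight_le (ε : ℝ) (k : ℝ × ℝ) :
    smoothingWeight ε k ≤ 25 / 16 * cauchyProduct ε k := by
  have hprod := mul_le_mul (latticeSymbol_div_sq_le (ε * k.1)) (latticeSymbol_div_sq_le (ε * k.2))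
    (div_nonneg (latticeSymbol_nonneg _) (sq_nonneg _)) (by positivity)
  rw [smoothingWeight_eq, cauchyProduct]
  linarith

lemma measurable_smoothingWeight (ε : ℝ) : Measurable (smoothingWeight ε) := by
  unfold smoothingWeight
  fun_prop

lemma integrable_smoothingWeight {ε : ℝ} (hε : ε ≠ 0) : Integrable (smoothingWeight ε) := by
  refine ((integrable_cauchyProduct hε).const_mul (25 / 16)).mono'
    (measurable_smoothingWeight ε).aestronglyMeasurable (.of_forall fun k => ?_)
  rw [Real.norm_of_nonneg (smoothingWeight_nonneg ε k)]
  exact smoothingWeight_le ε k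

lemma smoothingWeight_mul_inv_sub_inv_le {m ε : ℝ} (hm : m ≠ 0) (hε : ε ≠ 0) (k : ℝ × ℝ) :
    smoothingWeight ε k * ((sigmaEps ε k + m ^ 2)⁻¹ - (k.1 ^ 2 + k.2 ^ 2 + m ^ 2)⁻¹) ≤
      5 / 4 * ε ^ 2 * cauchyProduct ε k := by
  have hscaled := latticeSymbol_mul_inv_sub_inv_le (ε * k.1) (ε * k.2)
    (by positivity : 0 < (ε * m) ^ 2)
  have hsigma : sigmaEps ε k + m ^ 2 =
      (latticeSymbol (ε * k.1) + latticeSymbol (ε * k.2) + (ε * m) ^ 2) / ε ^ 2 := by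
    rw [sigmaEps_eq]
    field_simp
  have hsq : k.1 ^ 2 + k.2 ^ 2 + m ^ 2 =
      ((ε * k.1) ^ 2 + (ε * k.2) ^ 2 + (ε * m) ^ 2) / ε ^ 2 := by
    field_simp
  rw [hsigma, hsq, inv_div, inv_div, div_eq_mul_inv, div_eq_mul_inv, ← mul_sub, smoothingWeight_eq,
    cauchyProduct]
  linarith [mul_le_mul_of_nonneg_left hscaled (sq_nonneg ε)]

lemma integral_smoothingWeight_mul_inv_sub_inv_le {m ε : ℝ} (hm : m ≠ 0) (hε : ε ≠ 0) :
    ∫ k, smoothingWeight ε k * ((sigmaEps ε k + m ^ 2)⁻¹ - (k.1 ^ 2 + k.2 ^ 2 + m ^ 2)⁻¹) ≤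
      5 / 4 * Real.pi ^ 2 := by
  have hnonneg (k : ℝ × ℝ) : 0 ≤ smoothingWeight ε k *
      ((sigmaEps ε k + m ^ 2)⁻¹ - (k.1 ^ 2 + k.2 ^ 2 + m ^ 2)⁻¹) := by
    have := sigmaEps_nonneg ε k
    refine mul_nonneg (smoothingWeight_nonneg ε k) (sub_nonneg.mpr ?_)
    gcongr
    exact sigmaEps_le hε k
  calc ∫ k, smoothingWeight ε k * ((sigmaEps ε k + m ^ 2)⁻¹ - (k.1 ^ 2 + k.2 ^ 2 + m ^ 2)⁻¹)
      ≤ ∫ k, 5 / 4 * ε ^ 2 * cauchyProduct ε k :=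
        integral_mono_of_nonneg (.of_forall hnonneg) ((integrable_cauchyProduct hε).const_mul _)
          (.of_forall (smoothingWeight_mul_inv_sub_inv_le hm hε))
    _ = 5 / 4 * Real.pi ^ 2 := by
        rw [integral_const_mul, integral_cauchyProduct]
        field_simp

end SmoothingWeight

section GreenFunction

/-- The smoothing weight times the phase `e^{-i(x·y + z·k)}`, as a function of `q = (y, k)`. -/
noncomputable def greenAmplitude (ε : ℝ) (x z : ℝ × ℝ) (q : (ℝ × ℝ) × (ℝ × ℝ)) : ℂ :=
  (smoothingWeight ε q.2 : ℂ) *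
    Complex.exp (-Complex.I * ((x.1 * q.1.1 + x.2 * q.1.2) + (z.1 * q.2.1 + z.2 * q.2.2)))

/-- The smoothed Green function with massive symbol `a` in the variable `k`: the choices
`a = σ_ε + m²` and `a = |·|² + m²` give `GbarEps` and `GtildeEps`. -/
noncomputable def smoothedGreen (ε : ℝ) (a : ℝ × ℝ → ℝ) (x z : ℝ × ℝ) : ℂ :=
  ((1 / (2 * Real.pi) ^ 4 : ℝ) : ℂ) *
    ∫ y : ℝ × ℝ, ∫ k : ℝ × ℝ, ((y.1 ^ 2 + y.2 ^ 2 + a k) ^ 2)⁻¹ • greenAmplitude ε x z (y, k)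

lemma GbarEps_eq_smoothedGreen (m ε : ℝ) (x z : ℝ × ℝ) :
    GbarEps m ε x z = smoothedGreen ε (fun k => sigmaEps ε k + m ^ 2) x z := by
  simp only [GbarEps, smoothedGreen, greenAmplitude, smoothingWeight, Complex.real_smul,
    Complex.ofReal_inv, div_eq_inv_mul, add_assoc]

lemma GtildeEps_eq_smoothedGreen (m ε : ℝ) (x z : ℝ × ℝ) :
    GtildeEps m ε x z = smoothedGreen ε (fun k => k.1 ^ 2 + k.2 ^ 2 + m ^ 2) x z := by
  simp only [GtildeEps, smoothedGreen, greenAmplitude, smoothingWeight, Complex.real_smul,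
    Complex.ofReal_inv, div_eq_inv_mul, add_assoc]

lemma norm_greenAmplitude (ε : ℝ) (x z y k : ℝ × ℝ) :
    ‖greenAmplitude ε x z (y, k)‖ = smoothingWeight ε k := by
  rw [greenAmplitude, norm_mul, Complex.norm_real, Real.norm_of_nonneg (smoothingWeight_nonneg ε k),
    Complex.norm_exp]
  simp

lemma measurable_greenAmplitude (ε : ℝ) (x z : ℝ × ℝ) : Measurable (greenAmplitude ε x z) := by
  have := measurable_smoothingWeight ε
  unfold greenAmplitude
  fun_prop

theorem norm_smoothedGreen_sub_le {ε c : ℝ} {a b : ℝ × ℝ → ℝ} (hε : ε ≠ 0) (hc : 0 < c)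
    (hca : ∀ k, c ≤ a k) (hab : ∀ k, a k ≤ b k) (ha : Measurable a) (hb : Measurable b)
    (x z : ℝ × ℝ) :
    ‖smoothedGreen ε a x z - smoothedGreen ε b x z‖ ≤
      1 / (2 * Real.pi) ^ 4 * (Real.pi * ∫ k, smoothingWeight ε k * ((a k)⁻¹ - (b k)⁻¹)) := by
  rw [smoothedGreen, smoothedGreen, ← mul_sub, norm_mul, Complex.norm_real,
    Real.norm_of_nonneg (by positivity)]
  gcongr
  exact norm_integral_inv_sq_smul_sub_le hc hca hab ha hb (integrable_smoothingWeight hε)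
    (measurable_greenAmplitude ε x z).aestronglyMeasurable
    fun y k => (norm_greenAmplitude ε x z y k).le

end GreenFunction

theorem stmt_2_general {m ε : ℝ} (hm : m ≠ 0) (hε : ε ≠ 0) (x z : ℝ × ℝ) :
    ‖GbarEps m ε x z - GtildeEps m ε x z‖ ≤ 5 / (64 * Real.pi) := by
  have hsigma := measurable_sigmaEps ε
  rw [GbarEps_eq_smoothedGreen, GtildeEps_eq_smoothedGreen]
  calc _ ≤ 1 / (2 * Real.pi) ^ 4 * (Real.pi * ∫ k, smoothingWeight ε k *
          ((sigmaEps ε k + m ^ 2)⁻¹ - (k.1 ^ 2 + k.2 ^ 2 + m ^ 2)⁻¹)) :=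
        norm_smoothedGreen_sub_le hε (by positivity : 0 < m ^ 2)
          (fun k => le_add_of_nonneg_left (sigmaEps_nonneg ε k))
          (fun k => add_le_add_left (sigmaEps_le hε k) _) (by fun_prop) (by fun_prop) x z
    _ ≤ 1 / (2 * Real.pi) ^ 4 * (Real.pi * (5 / 4 * Real.pi ^ 2)) := by
        gcongr
        exact integral_smoothingWeight_mul_inv_sub_inv_le hm hε
    _ = 5 / (64 * Real.pi) := by
        field_simp
        norm_num

/-- Theorem 3.4: for every `m > 0` there is a constant `C₂ > 0`, independent of `ε`, such
that `|Ḡ_ε(x,z) − G̃_ε(x,z)| ≤ C₂` for all `ε ∈ (0,1]` and `(x,z) ∈ ℝ² × ℝ²`. -/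
theorem stmt_2 (m : ℝ) (hm : 0 < m) :
    ∃ C₂ : ℝ, 0 < C₂ ∧
      ∀ ε : ℝ, ε ∈ Set.Ioc (0 : ℝ) 1 → ∀ x z : ℝ × ℝ,
        ‖GbarEps m ε x z - GtildeEps m ε x z‖ ≤ C₂ := by
  exact ⟨5 / (64 * Real.pi), by positivity,
    fun _ hε x z => stmt_2_general hm.ne' hε.1.ne' x z⟩
end

section
/- Let p, q ∈ (1,∞) with 1/p + 1/q = 1, ℓ ∈ ℝ and ε ∈ (0,1]. For every measurable f : ℝ² → ℝ with ‖f‖_{L^p_ℓ(ℝ²)} < ∞ and every g : εℤ² → ℝ with ‖g‖_{L^q_{−ℓ}(εℤ²)} < ∞, both sides of the following identity are absolutely convergent and ∫_{ℝ²} f(x)·E^ε g(x) dx = ε² Σ_{z∈εℤ²} D^ε f(z)·g(z). -/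
open MeasureTheory
open scoped ENNReal

/-- The polynomial weight `ρ_ℓ(y) = (1+|y|²)^{-ℓ/2}` on `ℝ²`. -/
noncomputable def rho2 (ℓ : ℝ) (y : ℝ × ℝ) : ℝ := (1 + y.1 ^ 2 + y.2 ^ 2) ^ (-ℓ / 2)

/-- The lattice point `(εn₁, εn₂) ∈ εℤ² ⊂ ℝ²` indexed by `n ∈ ℤ²`. -/
noncomputable def pt (ε : ℝ) (n : ℤ × ℤ) : ℝ × ℝ := (ε * (n.1 : ℝ), ε * (n.2 : ℝ))

/-- The square `Q_ε(z) = (z₁-ε/2, z₁+ε/2] × (z₂-ε/2, z₂+ε/2]`. -/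
def Qeps (ε : ℝ) (z : ℝ × ℝ) : Set (ℝ × ℝ) :=
  Set.Ioc (z.1 - ε / 2) (z.1 + ε / 2) ×ˢ Set.Ioc (z.2 - ε / 2) (z.2 + ε / 2)

/-- The discretization operator `D^ε f(z) = ε⁻² ∫_{Q_ε(z)} f(x) dx`. -/
noncomputable def Deps (ε : ℝ) (f : ℝ × ℝ → ℝ) (n : ℤ × ℤ) : ℝ :=
  (ε ^ 2)⁻¹ * ∫ x in Qeps ε (pt ε n), f x

/-- The index of the cell `Q_ε(z)` containing `t` in one coordinate:
`t ∈ (εn - ε/2, εn + ε/2]` iff `n = ⌈t/ε - 1/2⌉`. -/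
noncomputable def cellIdx (ε t : ℝ) : ℤ := ⌈t / ε - 1 / 2⌉

/-- The extension operator `E^ε`, producing the piecewise constant function with
`E^ε f = f(z)` on `Q_ε(z)`. -/
noncomputable def Eeps (ε : ℝ) (f : ℤ × ℤ → ℝ) (x : ℝ × ℝ) : ℝ :=
  f (cellIdx ε x.1, cellIdx ε x.2)

/-- The weighted norm `‖g‖_{L^p_ℓ(ℝ²)} = (∫_{ℝ²} |ρ_ℓ(x) g(x)|^p dx)^{1/p}`,
valued in `ℝ≥0∞`. -/
noncomputable def lpNormR2 (p ℓ : ℝ) (g : ℝ × ℝ → ℝ) : ℝ≥0∞ :=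
  (∫⁻ x : ℝ × ℝ, ENNReal.ofReal (|rho2 ℓ x * g x| ^ p)) ^ (1 / p)

/-- The weighted lattice norm `‖f‖_{L^p_ℓ(εℤ²)} = (ε² Σ_{z∈εℤ²} |ρ_ℓ(z) f(z)|^p)^{1/p}`,
valued in `ℝ≥0∞`. -/
noncomputable def lpNormLat (p ℓ ε : ℝ) (f : ℤ × ℤ → ℝ) : ℝ≥0∞ :=
  (ENNReal.ofReal (ε ^ 2) *
    ∑' n : ℤ × ℤ, ENNReal.ofReal (|rho2 ℓ (pt ε n) * f n| ^ p)) ^ (1 / p)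

/-- The Euclidean length of a point of `ℝ²`. -/
noncomputable def en2 (y : ℝ × ℝ) : ℝ := Real.sqrt (y.1 ^ 2 + y.2 ^ 2)

/-- The weighted lattice `L^p_ℓ` norm of the difference `f(·+k) − f`. -/
noncomputable def latDiffNorm (p ℓ ε : ℝ) (f : ℤ × ℤ → ℝ) (k : ℤ × ℤ) : ℝ≥0∞ :=
  (ENNReal.ofReal (ε ^ 2) *
    ∑' n : ℤ × ℤ, ENNReal.ofReal (rho2 ℓ (pt ε n) ^ p * |f (n + k) - f n| ^ p)) ^ (1 / p)

/-- The lattice fractional Sobolev norm `‖f‖_{W^{s,p}_ℓ(εℤ²)} = ‖f‖_{L^p_ℓ(εℤ²)} +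
sup{ |k|^{-s} ‖f(·+k) − f‖_{L^p_ℓ(εℤ²)} : k ∈ εℤ², 0 < |k| ≤ 1 }`. -/
noncomputable def latWNorm (s p ℓ ε : ℝ) (f : ℤ × ℤ → ℝ) : ℝ≥0∞ :=
  lpNormLat p ℓ ε f +
    ⨆ (k : ℤ × ℤ) (_ : 0 < en2 (pt ε k) ∧ en2 (pt ε k) ≤ 1),
      ENNReal.ofReal (en2 (pt ε k) ^ (-s)) * latDiffNorm p ℓ ε f k

/-- The difference-quotient norm of the weighted Besov space `B^s_{p,∞,ℓ}(ℝ²)`: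
`‖g‖_{L^p_ℓ} + sup{ |h|^{-s} ‖g(·+h) − g‖_{L^p_ℓ} : h ∈ ℝ², 0 < |h| ≤ 1 }`. -/
noncomputable def besovDiffNormR2 (s p ℓ : ℝ) (g : ℝ × ℝ → ℝ) : ℝ≥0∞ :=
  lpNormR2 p ℓ g +
    ⨆ (h : ℝ × ℝ) (_ : 0 < en2 h ∧ en2 h ≤ 1),
      ENNReal.ofReal (en2 h ^ (-s)) * lpNormR2 p ℓ (fun x => g (x + h) - g x)

/-! Hölder's inequality for the weights `ρ_ℓ` and `ρ_{-ℓ} = ρ_ℓ⁻¹` makes `f · E^ε g` integrable as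
soon as `E^ε g ∈ L^q_{-ℓ}(ℝ²)`. The latter holds because, by Peetre's inequality, the weight varies
on a cell by at most a constant factor, so that `ρ_{-ℓ} · E^ε g` is dominated by the extension of
`ρ_{-ℓ} · g`, whose `L^q` norm is exactly the lattice norm. The identity is then countable
additivity of the integral over the cells, on each of which `E^ε g` is constant. -/

theorem hasSum_setIntegral_fiber {α ι E : Type*} [MeasurableSpace α] {μ : Measure α}
    [Countable ι] [MeasurableSpace ι] [MeasurableSingletonClass ι]
    [NormedAddCommGroup E] [NormedSpace ℝ E] {φ : α → ι} (hφ : Measurable φ)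
    {f : α → E} (hf : Integrable f μ) :
    HasSum (fun i => ∫ x in φ ⁻¹' {i}, f x ∂μ) (∫ x, f x ∂μ) := by
  have h := hasSum_integral_iUnion (fun i => hφ (measurableSet_singleton i))
    (pairwise_disjoint_fiber φ) hf.integrableOn
  rwa [← Set.preimage_iUnion, Set.iUnion_of_singleton, Set.preimage_univ, setIntegral_univ] at h

theorem rpow_le_rpow_abs_mul_rpow {a b C : ℝ} (ha : 0 < a) (hb : 0 < b) (hC : 0 < C)
    (hab : a ≤ C * b) (hba : b ≤ C * a) (s : ℝ) : a ^ s ≤ C ^ |s| * b ^ s := by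
  rcases le_total 0 s with hs | hs
  · rw [abs_of_nonneg hs, ← Real.mul_rpow hC.le hb.le]
    exact Real.rpow_le_rpow ha.le hab hs
  · calc a ^ s = C ^ (-s) * (C * a) ^ s := by
          rw [Real.mul_rpow hC.le ha.le, ← mul_assoc, ← Real.rpow_add hC, neg_add_cancel,
            Real.rpow_zero, one_mul]
      _ ≤ C ^ |s| * b ^ s := by
          rw [abs_of_nonpos hs]
          gcongr ?_ * ?_
          exact Real.rpow_le_rpow_of_nonpos hb hba hs

section Weight

theorem rho2_pos (ℓ : ℝ) (x : ℝ × ℝ) : 0 < rho2 ℓ x :=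
  Real.rpow_pos_of_pos (by positivity) _

theorem rho2_mul_rho2_neg (ℓ : ℝ) (x : ℝ × ℝ) : rho2 ℓ x * rho2 (-ℓ) x = 1 := by
  rw [rho2, rho2, ← Real.rpow_add (by positivity), ← add_div, neg_neg, neg_add_cancel, zero_div,
    Real.rpow_zero]

theorem measurable_rho2 (ℓ : ℝ) : Measurable (rho2 ℓ) := by
  unfold rho2
  fun_prop

/-- Peetre's inequality; `rho2 (-|ℓ|)` is the growing weight `(1 + |y|²) ^ (|ℓ| / 2)`. -/
theorem rho2_le_mul_rho2_sub_mul_rho2 (ℓ : ℝ) (x z : ℝ × ℝ) :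
    rho2 ℓ x ≤ 2 ^ (|ℓ| / 2) * rho2 (-|ℓ|) (x - z) * rho2 ℓ z := by
  have sq_le_two_mul (s t : ℝ) : s ^ 2 ≤ 2 * ((s - t) ^ 2 + t ^ 2) := by
    linarith [sq_nonneg (s - 2 * t)]
  have bracket_le (u v : ℝ × ℝ) : 1 + u.1 ^ 2 + u.2 ^ 2 ≤
      2 * (1 + (u.1 - v.1) ^ 2 + (u.2 - v.2) ^ 2) * (1 + v.1 ^ 2 + v.2 ^ 2) := by
    nlinarith [sq_le_two_mul u.1 v.1, sq_le_two_mul u.2 v.2,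
      mul_nonneg (add_nonneg (sq_nonneg (u.1 - v.1)) (sq_nonneg (u.2 - v.2)))
        (add_nonneg (sq_nonneg v.1) (sq_nonneg v.2))]
  have hzx := bracket_le z x
  rw [sub_sq_comm z.1, sub_sq_comm z.2] at hzx
  have h := rpow_le_rpow_abs_mul_rpow (by positivity) (by positivity) (by positivity)
    (bracket_le x z) hzx (-ℓ / 2)
  rw [abs_div, abs_neg, abs_two, Real.mul_rpow zero_le_two (by positivity)] at h
  simpa only [rho2, neg_neg, Prod.fst_sub, Prod.snd_sub] using h

theorem rho2_le_mul_rho2_of_mem_Qeps (ℓ : ℝ) {ε : ℝ} {x z : ℝ × ℝ} (hx : x ∈ Qeps ε z) :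
    rho2 ℓ x ≤ (2 + ε ^ 2) ^ (|ℓ| / 2) * rho2 ℓ z := by
  have sq_sub_le {s t : ℝ} (h : s ∈ Set.Ioc (t - ε / 2) (t + ε / 2)) :
      (s - t) ^ 2 ≤ (ε / 2) ^ 2 :=
    sq_le_sq' (by linarith [h.1]) (by linarith [h.2])
  have hsub : 1 + (x - z).1 ^ 2 + (x - z).2 ^ 2 ≤ 1 + ε ^ 2 / 2 := by
    rw [Prod.fst_sub, Prod.snd_sub]
    linarith [sq_sub_le hx.1, sq_sub_le hx.2]
  have hgrow : rho2 (-|ℓ|) (x - z) ≤ (1 + ε ^ 2 / 2) ^ (|ℓ| / 2) := by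
    rw [rho2, neg_neg]
    gcongr
  calc rho2 ℓ x ≤ 2 ^ (|ℓ| / 2) * rho2 (-|ℓ|) (x - z) * rho2 ℓ z :=
        rho2_le_mul_rho2_sub_mul_rho2 ℓ x z
    _ ≤ 2 ^ (|ℓ| / 2) * (1 + ε ^ 2 / 2) ^ (|ℓ| / 2) * rho2 ℓ z := by
        gcongr
        exact (rho2_pos ℓ z).le
    _ = (2 + ε ^ 2) ^ (|ℓ| / 2) * rho2 ℓ z := by
        rw [← Real.mul_rpow zero_le_two (by positivity)]
        ring_nf

end Weight

section Cells

variable {ε : ℝ}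

/-- The index `n ∈ ℤ²` of the cell `Q_ε(εn)` containing a point of the plane, so that
`E^ε g = g ∘ latticeIndex ε` holds definitionally and the cells are the fibres of this map. -/
noncomputable def latticeIndex (ε : ℝ) (x : ℝ × ℝ) : ℤ × ℤ := (cellIdx ε x.1, cellIdx ε x.2)

theorem measurable_latticeIndex (ε : ℝ) : Measurable (latticeIndex ε) := by
  unfold latticeIndex cellIdx
  fun_prop

theorem measurable_Eeps (ε : ℝ) (g : ℤ × ℤ → ℝ) : Measurable (Eeps ε g) :=
  (measurable_of_countable g).comp (measurable_latticeIndex ε)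

theorem cellIdx_eq_iff (hε : 0 < ε) {t : ℝ} {n : ℤ} :
    cellIdx ε t = n ↔ t ∈ Set.Ioc (ε * n - ε / 2) (ε * n + ε / 2) := by
  have hlower : (n : ℝ) - 1 < t / ε - 1 / 2 ↔ ε * n - ε / 2 < t := by
    rw [← mul_lt_mul_iff_right₀ hε, mul_sub, mul_sub, mul_div_cancel₀ t hε.ne']
    constructor <;> intro h <;> linarith
  have hupper : t / ε - 1 / 2 ≤ (n : ℝ) ↔ t ≤ ε * n + ε / 2 := by
    rw [← mul_le_mul_iff_right₀ hε, mul_sub, mul_div_cancel₀ t hε.ne']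
    constructor <;> intro h <;> linarith
  rw [cellIdx, Int.ceil_eq_iff, Set.mem_Ioc, hlower, hupper]

theorem preimage_latticeIndex_singleton (hε : 0 < ε) (n : ℤ × ℤ) :
    latticeIndex ε ⁻¹' {n} = Qeps ε (pt ε n) := by
  ext x
  rw [Set.mem_preimage, Set.mem_singleton_iff, latticeIndex, Prod.ext_iff, cellIdx_eq_iff hε,
    cellIdx_eq_iff hε, Qeps, pt, Set.mem_prod]

theorem mem_Qeps_pt_latticeIndex (hε : 0 < ε) (x : ℝ × ℝ) :
    x ∈ Qeps ε (pt ε (latticeIndex ε x)) := by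
  rw [← preimage_latticeIndex_singleton hε]
  rfl

theorem volume_Qeps (hε : 0 ≤ ε) (z : ℝ × ℝ) : volume (Qeps ε z) = ENNReal.ofReal (ε ^ 2) := by
  have hside (t : ℝ) : volume (Set.Ioc (t - ε / 2) (t + ε / 2)) = ENNReal.ofReal ε := by
    rw [Real.volume_Ioc]
    ring_nf
  rw [Qeps, Measure.volume_eq_prod, Measure.prod_prod, hside, hside, ← ENNReal.ofReal_mul hε, sq]

theorem lintegral_comp_latticeIndex (hε : 0 < ε) (h : ℤ × ℤ → ℝ≥0∞) :
    ∫⁻ x, h (latticeIndex ε x) = ENNReal.ofReal (ε ^ 2) * ∑' n, h n := by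
  have hφ := measurable_latticeIndex ε
  rw [← lintegral_map (measurable_of_countable h) hφ, lintegral_countable', ← ENNReal.tsum_mul_left]
  refine tsum_congr fun n => ?_
  rw [Measure.map_apply hφ (measurableSet_singleton n), preimage_latticeIndex_singleton hε,
    volume_Qeps hε.le, mul_comm]

theorem setIntegral_mul_Eeps (hε : 0 < ε) (f : ℝ × ℝ → ℝ) (g : ℤ × ℤ → ℝ) (n : ℤ × ℤ) :
    ∫ x in Qeps ε (pt ε n), f x * Eeps ε g x = ε ^ 2 * (Deps ε f n * g n) := by
  have hmeas : MeasurableSet (Qeps ε (pt ε n)) := measurableSet_Ioc.prod measurableSet_Ioc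
  have hconst : ∀ x ∈ Qeps ε (pt ε n), f x * Eeps ε g x = f x * g n := by
    intro x hx
    rw [← preimage_latticeIndex_singleton hε] at hx
    exact congrArg (fun k => f x * g k) hx
  rw [setIntegral_congr_fun hmeas hconst, integral_mul_const, Deps, ← mul_assoc,
    mul_inv_cancel_left₀ (by positivity)]

theorem hasSum_Deps_mul (hε : 0 < ε) {f : ℝ × ℝ → ℝ} {g : ℤ × ℤ → ℝ}
    (hfg : Integrable fun x => f x * Eeps ε g x) :
    HasSum (fun n => ε ^ 2 * (Deps ε f n * g n)) (∫ x, f x * Eeps ε g x) := by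
  simpa only [preimage_latticeIndex_singleton hε, setIntegral_mul_Eeps hε] using
    hasSum_setIntegral_fiber (measurable_latticeIndex ε) hfg

end Cells

section Norms

variable {p q ℓ ε : ℝ}

theorem lpNormR2_eq_eLpNorm (hp : 0 < p) (f : ℝ × ℝ → ℝ) :
    lpNormR2 p ℓ f = eLpNorm (fun x => rho2 ℓ x * f x) (ENNReal.ofReal p) volume := by
  rw [eLpNorm_eq_lintegral_rpow_enorm_toReal (ENNReal.ofReal_pos.2 hp).ne' ENNReal.ofReal_ne_top,
    ENNReal.toReal_ofReal hp.le, lpNormR2]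
  simp only [← ENNReal.ofReal_rpow_of_nonneg (abs_nonneg _) hp.le, ← Real.enorm_eq_ofReal_abs]

theorem integrable_mul_of_lpNormR2_lt_top (hpq : p.HolderConjugate q) {f g : ℝ × ℝ → ℝ}
    (hf : AEStronglyMeasurable f) (hg : AEStronglyMeasurable g)
    (hfp : lpNormR2 p ℓ f < ⊤) (hgq : lpNormR2 q (-ℓ) g < ⊤) :
    Integrable fun x => f x * g x := by
  have hweighted : Integrable fun x => rho2 ℓ x * f x * (rho2 (-ℓ) x * g x) := by
    rw [lpNormR2_eq_eLpNorm hpq.pos] at hfp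
    rw [lpNormR2_eq_eLpNorm hpq.symm.pos] at hgq
    have := hpq.ennrealOfReal
    exact MemLp.integrable_mul ⟨(measurable_rho2 ℓ).aestronglyMeasurable.mul hf, hfp⟩
      ⟨(measurable_rho2 (-ℓ)).aestronglyMeasurable.mul hg, hgq⟩
  refine hweighted.congr (.of_forall fun x => ?_)
  change rho2 ℓ x * f x * (rho2 (-ℓ) x * g x) = f x * g x
  rw [mul_mul_mul_comm, rho2_mul_rho2_neg, one_mul]

theorem eLpNorm_Eeps_rho2_mul (hq : 0 < q) (hε : 0 < ε) (g : ℤ × ℤ → ℝ) :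
    eLpNorm (Eeps ε fun n => rho2 ℓ (pt ε n) * g n) (ENNReal.ofReal q) volume =
      lpNormLat q ℓ ε g := by
  rw [eLpNorm_eq_lintegral_rpow_enorm_toReal (ENNReal.ofReal_pos.2 hq).ne' ENNReal.ofReal_ne_top,
    ENNReal.toReal_ofReal hq.le, lpNormLat]
  simp only [← ENNReal.ofReal_rpow_of_nonneg (abs_nonneg _) hq.le, ← Real.enorm_eq_ofReal_abs]
  congr 1
  exact lintegral_comp_latticeIndex hε fun n => ‖rho2 ℓ (pt ε n) * g n‖ₑ ^ q

theorem lpNormR2_Eeps_le (hq : 0 < q) (hε : 0 < ε) (g : ℤ × ℤ → ℝ) :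
    lpNormR2 q ℓ (Eeps ε g) ≤
      ENNReal.ofReal ((2 + ε ^ 2) ^ (|ℓ| / 2)) * lpNormLat q ℓ ε g := by
  rw [lpNormR2_eq_eLpNorm hq, ← eLpNorm_Eeps_rho2_mul hq hε]
  refine eLpNorm_le_mul_eLpNorm_of_ae_le_mul (.of_forall fun x => ?_) _
  have hrho := rho2_le_mul_rho2_of_mem_Qeps ℓ (mem_Qeps_pt_latticeIndex hε x)
  change ‖rho2 ℓ x * g (latticeIndex ε x)‖ ≤
    _ * ‖rho2 ℓ (pt ε (latticeIndex ε x)) * g (latticeIndex ε x)‖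
  rw [norm_mul, norm_mul, Real.norm_of_nonneg (rho2_pos _ _).le,
    Real.norm_of_nonneg (rho2_pos _ _).le, ← mul_assoc]
  gcongr

end Norms

theorem stmt_7_general {p q ℓ ε : ℝ} (hpq : p.HolderConjugate q) (hε : 0 < ε)
    {f : ℝ × ℝ → ℝ} (hf : AEStronglyMeasurable f) (hfp : lpNormR2 p ℓ f < ⊤)
    {g : ℤ × ℤ → ℝ} (hg : lpNormLat q (-ℓ) ε g < ⊤) :
    Integrable (fun x : ℝ × ℝ => f x * Eeps ε g x) ∧
      Summable (fun n : ℤ × ℤ => Deps ε f n * g n) ∧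
      ∫ x : ℝ × ℝ, f x * Eeps ε g x = ε ^ 2 * ∑' n : ℤ × ℤ, Deps ε f n * g n := by
  have hEg : lpNormR2 q (-ℓ) (Eeps ε g) < ⊤ :=
    (lpNormR2_Eeps_le hpq.symm.pos hε g).trans_lt (ENNReal.mul_lt_top ENNReal.ofReal_lt_top hg)
  have hint : Integrable fun x => f x * Eeps ε g x :=
    integrable_mul_of_lpNormR2_lt_top hpq hf (measurable_Eeps ε g).aestronglyMeasurable hfp hEg
  have hsum := hasSum_Deps_mul hε hint
  refine ⟨hint, (summable_mul_left_iff (by positivity)).1 hsum.summable, ?_⟩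
  rw [← tsum_mul_left, hsum.tsum_eq]

/-- Lemma 2.22 (duality identity): for `p, q ∈ (1,∞)` conjugate, `ℓ ∈ ℝ`, `ε ∈ (0,1]`,
`f ∈ L^p_ℓ(ℝ²)` and `g ∈ L^q_{-ℓ}(εℤ²)`, both sides are absolutely convergent and
`∫_{ℝ²} f(x) E^ε g(x) dx = ε² Σ_{z∈εℤ²} D^ε f(z) g(z)`. -/
theorem stmt_7 (p q ℓ : ℝ) (hp : 1 < p) (hq : 1 < q) (hpq : 1 / p + 1 / q = 1)
    (ε : ℝ) (hε : ε ∈ Set.Ioc (0 : ℝ) 1)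
    (f : ℝ × ℝ → ℝ) (hf : Measurable f) (hfp : lpNormR2 p ℓ f < ⊤)
    (g : ℤ × ℤ → ℝ) (hg : lpNormLat q (-ℓ) ε g < ⊤) :
    Integrable (fun x : ℝ × ℝ => f x * Eeps ε g x) ∧
      Summable (fun n : ℤ × ℤ => Deps ε f n * g n) ∧
      ∫ x : ℝ × ℝ, f x * Eeps ε g x = ε ^ 2 * ∑' n : ℤ × ℤ, Deps ε f n * g n := by
  exact stmt_7_general (Real.holderConjugate_iff.2 ⟨hp, by simpa only [one_div] using hpq⟩) hε.1
    hf.aestronglyMeasurable hfp hg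
end
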